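/- Let A be a set with a length function μ. (a) For any word 𝐰 = a₁(r₁)⋯a_k(r_k) in the alphabet {a(r) : a ∈ A, r ∈ ℝ}, the function t ↦ (1/t)·‖𝐰[t]‖_{F(A;μ)} (for t > 0) is Cauchy as t → ∞; in particular the limit lim_{t→∞} (1/t)‖𝐰[t]‖_{F(A;μ)} exists. (b) If two words 𝐰 and 𝐰' represent the same element of F_ℝ(A), then lim_{t→∞} (1/t)‖𝐰[t]‖_{F(A;μ)} = lim_{t→∞} (1/t)‖𝐰'[t]‖_{F(A;μ)}. -/

import Mathlib

/-!
The conjugation-invariant word norm `‖·‖` on `F(A)` is a conjugation-invariant seminorm, and it is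
the largest one satisfying `‖a‖ ≤ μ a` for every letter `a`. Conjugation invariance means that
changing the exponents of a word moves the word by at most the weighted total change.

Convergence: by maximality, the endomorphism `a ↦ a ^ n` of `F(A)` multiplies norms by at most `n`.
For `n = ⌊s / t⌋` it sends `𝐰[t]` to a word whose exponents differ from those of `𝐰[s]` by
`O(n) + O_t(1)`. Hence, for a suitable constant `W`, the function `F(t) = ‖𝐰[t]‖ + W` satisfies
`F(s) ≤ (s / t) F(t) + O_t(1)`, and as in Fekete's lemma `F(t) / t` converges to its infimum.

Independence of the word: the functions `ℝ → F(A)` of bounded norm form a normal subgroup of the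
group of all functions. Modulo this subgroup, `r ↦ (t ↦ a ^ ⟦t r⟧)` is a homomorphism, so by the
universal property of the free product the class of `t ↦ 𝐰[t]` depends only on the element of
`F_ℝ(A)` represented by `𝐰`.
-/

open Filter

/-- The set of total lengths of expressions of `g` as a product of conjugates
of generators `gen i ^ {±1}`, each weighted by the length function `ℓ`. -/
def wordNormSet {G : Type*} [Group G] {I : Type*}
    (gen : I → G) (ℓ : I → ℝ) (g : G) : Set ℝ :=
  { x | ∃ l : List (G × I × Bool),
      g = (l.map fun p => p.1 * (if p.2.2 then gen p.2.1 else (gen p.2.1)⁻¹) * p.1⁻¹).prod ∧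
      x = (l.map fun p => ℓ p.2.1).sum }

/-- The conjugation-invariant word norm associated to a length function. -/
noncomputable def wordNorm {G : Type*} [Group G] {I : Type*}
    (gen : I → G) (ℓ : I → ℝ) (g : G) : ℝ :=
  sInf (wordNormSet gen ℓ g)

/-- `F_ℝ(A)`: the free product of copies of `ℝ` indexed by `A`. -/
abbrev FR (A : Type*) : Type _ := Monoid.CoprodI (fun _ : A => Multiplicative ℝ)

/-- The generator `a(r)` of `F_ℝ(A)`. -/
def genFR (A : Type*) (p : A × ℝ) : FR A :=
  Monoid.CoprodI.of (i := p.1) (Multiplicative.ofAdd p.2)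

/-- `⟦x⟧`: the floor of `x` for `x ≥ 0`, the ceiling of `x` for `x ≤ 0`. -/
noncomputable def myfloor (x : ℝ) : ℤ := if 0 ≤ x then ⌊x⌋ else ⌈x⌉

/-- The element of `F_ℝ(A)` represented by the word `𝐰 = a₁(r₁)⋯a_k(r_k)`. -/
def wordProd {A : Type*} (l : List (A × ℝ)) : FR A :=
  (l.map (genFR A)).prod

/-- The truncation `𝐰[t] = a₁^{⟦t r₁⟧} ⋯ a_k^{⟦t r_k⟧}` as an element of the
free group `F(A)`. -/
noncomputable def truncFG {A : Type*} (l : List (A × ℝ)) (t : ℝ) : FreeGroup A :=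
  (l.map fun p => FreeGroup.of p.1 ^ (myfloor (t * p.2))).prod

/-- The scaled norm function `t ↦ (1/t)·‖𝐰[t]‖_{F(A;μ)}`. -/
noncomputable def scaledTruncNorm {A : Type*} (μ : A → ℝ) (l : List (A × ℝ)) (t : ℝ) : ℝ :=
  (1 / t) * wordNorm FreeGroup.of μ (truncFG l t)

/-! ### Conjugation-invariant seminorms -/

/-- A group seminorm that is constant on conjugacy classes. This is a class so that
`boundedSubgroup N X` is normal by instance resolution. -/
class IsConjInvariant {G : Type*} [Group G] (N : GroupSeminorm G) : Prop where
  map_conj (u g : G) : N (u * g * u⁻¹) = N g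

section ConjInvariant

variable {G H : Type*} [Group G] [Group H] (N : GroupSeminorm G)

theorem map_pow_le_mul_map (g : G) (n : ℕ) : N (g ^ n) ≤ n * N g := by
  induction n with
  | zero => simp
  | succ n ih =>
    calc N (g ^ (n + 1)) ≤ N (g ^ n) + N g := pow_succ g n ▸ map_mul_le_add N _ _
      _ ≤ n * N g + N g := by gcongr
      _ = (n + 1 : ℕ) * N g := by push_cast; ring

theorem map_zpow_le_abs_mul_map (g : G) (m : ℤ) : N (g ^ m) ≤ |(m : ℝ)| * N g := by
  obtain ⟨n, rfl | rfl⟩ := m.eq_nat_or_neg <;> simpa using map_pow_le_mul_map N g n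

/-- The subgroup of functions `f : X → G` for which `N ∘ f` is bounded. Two functions agree modulo
this subgroup when they stay at bounded distance from one another. -/
def boundedSubgroup (X : Type*) : Subgroup (X → G) where
  carrier := {f | ∃ C, ∀ x, N (f x) ≤ C}
  mul_mem' := by
    rintro f g ⟨C, hf⟩ ⟨D, hg⟩
    exact ⟨C + D, fun x => (map_mul_le_add N _ _).trans (add_le_add (hf x) (hg x))⟩
  one_mem' := ⟨0, fun _ => (map_one_eq_zero N).le⟩
  inv_mem' := by
    rintro f ⟨C, hf⟩
    exact ⟨C, fun x => (map_inv_eq_map N (f x)).trans_le (hf x)⟩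

variable [IsConjInvariant N]

instance IsConjInvariant.comp (φ : H →* G) : IsConjInvariant (N.comp φ) where
  map_conj u g := by simpa using IsConjInvariant.map_conj (N := N) (φ u) (φ g)

theorem map_mul_div_mul_le (a b g h : G) : N (a * g / (b * h)) ≤ N (a / b) + N (g / h) :=
  calc N (a * g / (b * h)) = N (a * (g / h) * a⁻¹ * (a / b)) := by simp [div_eq_mul_inv, mul_assoc]
    _ ≤ N (a * (g / h) * a⁻¹) + N (a / b) := map_mul_le_add N _ _
    _ = N (a / b) + N (g / h) := by rw [IsConjInvariant.map_conj, add_comm]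

theorem map_prod_div_prod_le {ι : Type*} (l : List ι) (f g : ι → G) :
    N ((l.map f).prod / (l.map g).prod) ≤ (l.map fun i => N (f i / g i)).sum := by
  induction l with
  | nil => simp
  | cons i l ih =>
    simp only [List.map_cons, List.prod_cons, List.sum_cons]
    exact (map_mul_div_mul_le N _ _ _ _).trans (add_le_add_right ih _)

instance boundedSubgroup.normal (X : Type*) : (boundedSubgroup N X).Normal where
  conj_mem := by
    rintro f ⟨C, hf⟩ g
    exact ⟨C, fun x => (IsConjInvariant.map_conj (g x) (f x)).trans_le (hf x)⟩

end ConjInvariant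

/-! ### The conjugation-invariant word norm -/

section WordNorm

variable {G I : Type*} [Group G] {gen : I → G} {ℓ : I → ℝ} {g h : G} {x y : ℝ}

theorem zero_mem_wordNormSet_one : (0 : ℝ) ∈ wordNormSet gen ℓ 1 := ⟨[], by simp⟩

theorem add_mem_wordNormSet_mul (hx : x ∈ wordNormSet gen ℓ g) (hy : y ∈ wordNormSet gen ℓ h) :
    x + y ∈ wordNormSet gen ℓ (g * h) := by
  obtain ⟨l, rfl, rfl⟩ := hx
  obtain ⟨m, rfl, rfl⟩ := hy
  exact ⟨l ++ m, by simp, by simp⟩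

theorem mem_wordNormSet_gen (i : I) : ℓ i ∈ wordNormSet gen ℓ (gen i) :=
  ⟨[(1, i, true)], by simp, by simp⟩

theorem mem_wordNormSet_conj (u : G) (hx : x ∈ wordNormSet gen ℓ g) :
    x ∈ wordNormSet gen ℓ (u * g * u⁻¹) := by
  obtain ⟨l, rfl, rfl⟩ := hx
  refine ⟨l.map fun p => (u * p.1, p.2), ?_, by simp [Function.comp_def]⟩
  rw [← MulAut.conj_apply, map_list_prod, List.map_map, List.map_map]
  simp [Function.comp_def, mul_assoc]

theorem mem_wordNormSet_inv (hx : x ∈ wordNormSet gen ℓ g) : x ∈ wordNormSet gen ℓ g⁻¹ := by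
  obtain ⟨l, rfl, rfl⟩ := hx
  refine ⟨(l.map fun p => (p.1, p.2.1, !p.2.2)).reverse, ?_, by simp [Function.comp_def]⟩
  rw [List.prod_inv_reverse, List.map_reverse, List.map_map, List.map_map]
  congr 3
  funext ⟨u, i, b⟩
  cases b <;> simp [mul_assoc]

theorem wordNormSet_conj (u g : G) : wordNormSet gen ℓ (u * g * u⁻¹) = wordNormSet gen ℓ g := by
  refine Set.Subset.antisymm (fun x hx => ?_) fun x => mem_wordNormSet_conj u
  simpa [mul_assoc] using mem_wordNormSet_conj u⁻¹ hx

theorem wordNormSet_inv (g : G) : wordNormSet gen ℓ g⁻¹ = wordNormSet gen ℓ g :=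
  Set.Subset.antisymm (fun _ hx => by simpa using mem_wordNormSet_inv hx)
    fun _ => mem_wordNormSet_inv

theorem wordNormSet_nonempty (hg : g ∈ Subgroup.normalClosure (Set.range gen)) :
    (wordNormSet gen ℓ g).Nonempty := by
  induction hg using Subgroup.closure_induction with
  | mem g hg =>
    obtain ⟨_, ⟨i, rfl⟩, hconj⟩ := Group.mem_conjugatesOfSet_iff.1 hg
    obtain ⟨u, rfl⟩ := isConj_iff.1 hconj
    exact ⟨ℓ i, mem_wordNormSet_conj u (mem_wordNormSet_gen i)⟩
  | one => exact ⟨0, zero_mem_wordNormSet_one⟩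
  | mul g h _ _ ihg ihh => exact ⟨_, add_mem_wordNormSet_mul ihg.some_mem ihh.some_mem⟩
  | inv g _ ih => rwa [wordNormSet_inv]

theorem zero_mem_lowerBounds_wordNormSet (hℓ : ∀ i, 0 ≤ ℓ i) (g : G) :
    0 ∈ lowerBounds (wordNormSet gen ℓ g) := by
  rintro _ ⟨l, -, rfl⟩
  exact List.sum_nonneg (List.forall_mem_map.2 fun _ _ => hℓ _)

theorem wordNorm_le_of_mem (hℓ : ∀ i, 0 ≤ ℓ i) (hx : x ∈ wordNormSet gen ℓ g) :
    wordNorm gen ℓ g ≤ x :=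
  csInf_le ⟨0, zero_mem_lowerBounds_wordNormSet hℓ g⟩ hx

theorem wordNorm_one (hℓ : ∀ i, 0 ≤ ℓ i) : wordNorm gen ℓ 1 = 0 :=
  IsLeast.csInf_eq ⟨zero_mem_wordNormSet_one, zero_mem_lowerBounds_wordNormSet hℓ 1⟩

theorem wordNorm_mul_le (hℓ : ∀ i, 0 ≤ ℓ i) (hg : (wordNormSet gen ℓ g).Nonempty)
    (hh : (wordNormSet gen ℓ h).Nonempty) :
    wordNorm gen ℓ (g * h) ≤ wordNorm gen ℓ g + wordNorm gen ℓ h := by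
  have hbdd (k : G) : BddBelow (wordNormSet gen ℓ k) := ⟨0, zero_mem_lowerBounds_wordNormSet hℓ k⟩
  rw [wordNorm, wordNorm, wordNorm, ← csInf_add hg (hbdd g) hh (hbdd h)]
  exact csInf_le_csInf (hbdd _) (hg.add hh) (Set.add_subset_iff.2 fun _ hx _ hy =>
    add_mem_wordNormSet_mul hx hy)

/-- The word norm as a bundled seminorm. The generators must normally generate `G`: otherwise
`wordNorm` takes the junk value `0` outside their normal closure and is not subadditive. -/
noncomputable def wordSeminorm (hgen : Subgroup.normalClosure (Set.range gen) = ⊤)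
    (hℓ : ∀ i, 0 ≤ ℓ i) : GroupSeminorm G where
  toFun := wordNorm gen ℓ
  map_one' := wordNorm_one hℓ
  mul_le' _ _ := wordNorm_mul_le hℓ (wordNormSet_nonempty (hgen ▸ Subgroup.mem_top _))
    (wordNormSet_nonempty (hgen ▸ Subgroup.mem_top _))
  inv' g := congrArg sInf (wordNormSet_inv g)

instance wordSeminorm.isConjInvariant (hgen : Subgroup.normalClosure (Set.range gen) = ⊤)
    (hℓ : ∀ i, 0 ≤ ℓ i) : IsConjInvariant (wordSeminorm hgen hℓ) where
  map_conj u g := congrArg sInf (wordNormSet_conj u g)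

theorem map_le_mul_of_mem_wordNormSet (N : GroupSeminorm G) [IsConjInvariant N] {c : ℝ}
    (hN : ∀ i, N (gen i) ≤ c * ℓ i) (hx : x ∈ wordNormSet gen ℓ g) : N g ≤ c * x := by
  obtain ⟨l, rfl, rfl⟩ := hx
  induction l with
  | nil => simp
  | cons p l ih =>
    have hletter : N (p.1 * (if p.2.2 then gen p.2.1 else (gen p.2.1)⁻¹) * p.1⁻¹) ≤
        c * ℓ p.2.1 := by
      rw [IsConjInvariant.map_conj]
      split_ifs
      · exact hN _
      · exact (map_inv_eq_map N _).trans_le (hN _)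
    simp only [List.map_cons, List.prod_cons, List.sum_cons, mul_add]
    exact (map_mul_le_add N _ _).trans (add_le_add hletter ih)

theorem map_le_mul_wordNorm (N : GroupSeminorm G) [IsConjInvariant N] {c : ℝ} (hc : 0 ≤ c)
    (hN : ∀ i, N (gen i) ≤ c * ℓ i) (hg : (wordNormSet gen ℓ g).Nonempty) :
    N g ≤ c * wordNorm gen ℓ g := by
  rw [wordNorm, ← smul_eq_mul, ← Real.sInf_smul_of_nonneg hc]
  refine le_csInf hg.smul_set ?_
  rintro _ ⟨x, hx, rfl⟩
  exact map_le_mul_of_mem_wordNormSet N hN hx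

end WordNorm

/-! ### Limits of quotients -/

section Limits

theorem tendsto_div_of_abs_sub_le {α : Type*} {u : Filter α} {F F' b : α → ℝ} {C L : ℝ}
    (hb : Tendsto b u atTop) (hF : Tendsto (fun x => F x / b x) u (nhds L))
    (h : ∀ x, |F' x - F x| ≤ C) : Tendsto (fun x => F' x / b x) u (nhds L) := by
  have hdiff : Tendsto (fun x => (F' x - F x) / b x) u (nhds 0) :=
    tendsto_bdd_div_atTop_nhds_zero (.of_forall fun x => (abs_le.1 (h x)).1)
      (.of_forall fun x => (abs_le.1 (h x)).2) hb
  simpa [← add_div] using hdiff.add hF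

/-- A continuous-parameter version of Fekete's lemma `Subadditive.tendsto_lim`. -/
theorem tendsto_div_atTop_sInf_of_le_div_mul_add {F : ℝ → ℝ}
    (hbdd : BddBelow ((fun t => F t / t) '' Set.Ioi 0))
    (h : ∀ t > 0, ∃ E, ∀ᶠ s in atTop, F s ≤ s / t * F t + E) :
    Tendsto (fun t => F t / t) atTop (nhds (sInf ((fun t => F t / t) '' Set.Ioi 0))) := by
  refine tendsto_order.2 ⟨fun a ha => ?_, fun a ha => ?_⟩
  · filter_upwards [eventually_gt_atTop 0] with s hs
    exact ha.trans_le (csInf_le hbdd ⟨s, hs, rfl⟩)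
  · obtain ⟨_, ⟨t, ht, rfl⟩, hta⟩ :=
      exists_lt_of_csInf_lt ((Set.nonempty_Ioi (a := (0 : ℝ))).image _) ha
    obtain ⟨E, hE⟩ := h t ht
    have herror : Tendsto (fun s => E / s) atTop (nhds 0) := tendsto_const_nhds.div_atTop tendsto_id
    filter_upwards [hE, herror.eventually_lt_const (sub_pos.2 hta), eventually_gt_atTop 0]
      with s hFs hEs hs
    calc F s / s ≤ (s / t * F t + E) / s := by gcongr
      _ = F t / t + E / s := by field_simp
      _ < a := by linarith

end Limits

/-! ### Integer truncation -/

section Truncation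

theorem abs_myfloor_sub_le (x : ℝ) : |(myfloor x : ℝ) - x| ≤ 1 := by
  unfold myfloor
  rw [abs_le]
  split_ifs
  · constructor <;> linarith [Int.floor_le x, Int.lt_floor_add_one x]
  · constructor <;> linarith [Int.le_ceil x, Int.ceil_lt_add_one x]

theorem abs_myfloor_add_sub_le (x y : ℝ) :
    |(myfloor (x + y) : ℝ) - (myfloor x + myfloor y)| ≤ 3 := by
  have hxy := abs_le.1 (abs_myfloor_sub_le (x + y))
  have hx := abs_le.1 (abs_myfloor_sub_le x)
  have hy := abs_le.1 (abs_myfloor_sub_le y)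
  exact abs_le.2 ⟨by linarith, by linarith⟩

theorem abs_myfloor_sub_natCast_mul_myfloor_le (n : ℕ) (x y : ℝ) :
    |(myfloor x : ℝ) - n * myfloor y| ≤ 1 + n + |x - n * y| :=
  calc |(myfloor x : ℝ) - n * myfloor y|
      = |(myfloor x - x) - n * (myfloor y - y) + (x - n * y)| := by congr 1; ring
    _ ≤ |(myfloor x : ℝ) - x| + |n * (myfloor y - y)| + |x - n * y| :=
      (abs_add_le _ _).trans (add_le_add_left (abs_sub _ _) _)
    _ ≤ 1 + n + |x - n * y| := by
      rw [abs_mul, Nat.abs_cast]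
      gcongr
      · exact abs_myfloor_sub_le x
      · exact mul_le_of_le_one_right n.cast_nonneg (abs_myfloor_sub_le y)

/-- The map `r ↦ (t ↦ g ^ ⟦t r⟧)`, a homomorphism modulo functions of bounded seminorm because
`⟦·⟧` is additive up to a bounded error. -/
noncomputable def truncPowHom {G : Type*} [Group G] (N : GroupSeminorm G) [IsConjInvariant N]
    (g : G) : Multiplicative ℝ →* (ℝ → G) ⧸ boundedSubgroup N ℝ :=
  MonoidHom.mk' (fun r => QuotientGroup.mk fun t => g ^ myfloor (t * r.toAdd)) <| by
    intro r s
    rw [← QuotientGroup.mk_mul, QuotientGroup.eq_iff_div_mem]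
    refine ⟨3 * N g, fun t => ?_⟩
    simp only [Pi.div_apply, Pi.mul_apply, toAdd_mul, mul_add, ← zpow_add]
    rw [div_eq_mul_inv, ← zpow_sub]
    refine (map_zpow_le_abs_mul_map N g _).trans ?_
    gcongr
    exact_mod_cast abs_myfloor_add_sub_le (t * r.toAdd) (t * s.toAdd)

end Truncation

/-! ### Truncated words in the free group -/

section FreeGroupNorm

variable {A : Type*} {μ : A → ℝ}

theorem normalClosure_range_of : Subgroup.normalClosure (Set.range (FreeGroup.of (α := A))) = ⊤ :=
  top_le_iff.1 ((FreeGroup.closure_range_of A).ge.trans Subgroup.closure_le_normalClosure)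

/-- The norm `‖·‖_{F(A;μ)}` as a bundled seminorm. -/
noncomputable abbrev freeSeminorm (hμ : ∀ a, 0 ≤ μ a) : GroupSeminorm (FreeGroup A) :=
  wordSeminorm normalClosure_range_of hμ

theorem freeSeminorm_of_le (hμ : ∀ a, 0 ≤ μ a) (a : A) : freeSeminorm hμ (FreeGroup.of a) ≤ μ a :=
  wordNorm_le_of_mem hμ (mem_wordNormSet_gen a)

/-- The endomorphism of the free group raising every letter to its `n`-th power. It models the
dilation of words by the factor `n`. -/
def powerEndo (A : Type*) (n : ℕ) : FreeGroup A →* FreeGroup A :=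
  FreeGroup.lift fun a => FreeGroup.of a ^ n

theorem freeSeminorm_powerEndo_le (hμ : ∀ a, 0 ≤ μ a) (n : ℕ) (g : FreeGroup A) :
    freeSeminorm hμ (powerEndo A n g) ≤ n * freeSeminorm hμ g := by
  refine map_le_mul_wordNorm ((freeSeminorm hμ).comp (powerEndo A n)) n.cast_nonneg (fun a => ?_)
    (wordNormSet_nonempty (normalClosure_range_of ▸ Subgroup.mem_top g))
  calc freeSeminorm hμ (powerEndo A n (FreeGroup.of a))
      = freeSeminorm hμ (FreeGroup.of a ^ n) := by rw [powerEndo, FreeGroup.lift_apply_of]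
    _ ≤ n * freeSeminorm hμ (FreeGroup.of a) := map_pow_le_mul_map _ _ n
    _ ≤ n * μ a := by gcongr; exact freeSeminorm_of_le hμ a

theorem powerEndo_truncFG (n : ℕ) (l : List (A × ℝ)) (t : ℝ) :
    powerEndo A n (truncFG l t) =
      (l.map fun p => FreeGroup.of p.1 ^ ((n : ℤ) * myfloor (t * p.2))).prod := by
  simp only [truncFG, map_list_prod, List.map_map]
  congr 2
  funext p
  simp [powerEndo, zpow_mul]

/-- The sum `∑ᵢ μ(aᵢ)` over the letters of the word `a₁(r₁)⋯a_k(r_k)`, which bounds the effect of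
rounding each exponent. -/
def letterWeight (μ : A → ℝ) (l : List (A × ℝ)) : ℝ :=
  (l.map fun p => μ p.1).sum

/-- The weighted total exponent `∑ᵢ |rᵢ| μ(aᵢ)` of the word `a₁(r₁)⋯a_k(r_k)`, which bounds the
effect of rescaling it. -/
def exponentWeight (μ : A → ℝ) (l : List (A × ℝ)) : ℝ :=
  (l.map fun p => |p.2| * μ p.1).sum

theorem letterWeight_nonneg (hμ : ∀ a, 0 ≤ μ a) (l : List (A × ℝ)) : 0 ≤ letterWeight μ l :=
  List.sum_nonneg (List.forall_mem_map.2 fun _ _ => hμ _)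

theorem exponentWeight_nonneg (hμ : ∀ a, 0 ≤ μ a) (l : List (A × ℝ)) : 0 ≤ exponentWeight μ l :=
  List.sum_nonneg (List.forall_mem_map.2 fun _ _ => mul_nonneg (abs_nonneg _) (hμ _))

theorem freeSeminorm_truncFG_div_powerEndo_le (hμ : ∀ a, 0 ≤ μ a) (l : List (A × ℝ)) (n : ℕ)
    (s t : ℝ) :
    freeSeminorm hμ (truncFG l s / powerEndo A n (truncFG l t)) ≤
      (1 + n) * letterWeight μ l + |s - n * t| * exponentWeight μ l := by
  have hletter (p : A × ℝ) :
      freeSeminorm hμ (FreeGroup.of p.1 ^ myfloor (s * p.2) /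
        FreeGroup.of p.1 ^ ((n : ℤ) * myfloor (t * p.2))) ≤
      (1 + n) * μ p.1 + |s - n * t| * (|p.2| * μ p.1) := by
    have hexp := abs_myfloor_sub_natCast_mul_myfloor_le n (s * p.2) (t * p.2)
    rw [← mul_assoc, ← sub_mul, abs_mul] at hexp
    rw [div_eq_mul_inv, ← zpow_sub, ← mul_assoc, ← add_mul]
    refine (map_zpow_le_abs_mul_map _ _ _).trans ?_
    gcongr
    · exact_mod_cast hexp
    · exact freeSeminorm_of_le hμ p.1
  rw [powerEndo_truncFG, letterWeight, exponentWeight, ← List.sum_map_mul_left,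
    ← List.sum_map_mul_left, ← List.sum_map_add]
  exact (map_prod_div_prod_le _ l _ _).trans (List.sum_le_sum fun p _ => hletter p)

theorem freeSeminorm_truncFG_le (hμ : ∀ a, 0 ≤ μ a) (l : List (A × ℝ)) {s t : ℝ} (hs : 0 ≤ s)
    (ht : 0 < t) :
    freeSeminorm hμ (truncFG l s) ≤
      s / t * (freeSeminorm hμ (truncFG l t) + letterWeight μ l) +
        (letterWeight μ l + t * exponentWeight μ l) := by
  set n := ⌊s / t⌋₊
  set W := letterWeight μ l
  have hW : 0 ≤ W := letterWeight_nonneg hμ l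
  have hn : (n : ℝ) ≤ s / t := Nat.floor_le (div_nonneg hs ht.le)
  have hremainder : |s - n * t| * exponentWeight μ l ≤ t * exponentWeight μ l := by
    rw [natCast_floor_eq_intCast_floor (div_nonneg hs ht.le),
      abs_of_nonneg (Int.sub_floor_div_mul_nonneg s ht)]
    exact mul_le_mul_of_nonneg_right (Int.sub_floor_div_mul_lt s ht).le
      (exponentWeight_nonneg hμ l)
  calc freeSeminorm hμ (truncFG l s)
      ≤ freeSeminorm hμ (powerEndo A n (truncFG l t)) +
          freeSeminorm hμ (truncFG l s / powerEndo A n (truncFG l t)) := le_map_add_map_div _ _ _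
    _ ≤ n * freeSeminorm hμ (truncFG l t) + ((1 + n) * W + t * exponentWeight μ l) :=
      add_le_add (freeSeminorm_powerEndo_le hμ n _)
        ((freeSeminorm_truncFG_div_powerEndo_le hμ l n s t).trans (add_le_add_right hremainder _))
    _ = n * (freeSeminorm hμ (truncFG l t) + W) + (W + t * exponentWeight μ l) := by ring
    _ ≤ _ := by gcongr

theorem scaledTruncNorm_eq_div (hμ : ∀ a, 0 ≤ μ a) (l : List (A × ℝ)) :
    scaledTruncNorm μ l = fun t => freeSeminorm hμ (truncFG l t) / t :=
  funext fun _ => one_div_mul_eq_div _ _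

theorem exists_tendsto_scaledTruncNorm (hμ : ∀ a, 0 ≤ μ a) (l : List (A × ℝ)) :
    ∃ L : ℝ, Tendsto (scaledTruncNorm μ l) atTop (nhds L) := by
  have hbdd : BddBelow
      ((fun t => (freeSeminorm hμ (truncFG l t) + letterWeight μ l) / t) '' Set.Ioi 0) := by
    refine ⟨0, ?_⟩
    rintro _ ⟨t, ht, rfl⟩
    exact div_nonneg (add_nonneg (apply_nonneg _ _) (letterWeight_nonneg hμ l)) (le_of_lt ht)
  have hlim := tendsto_div_atTop_sInf_of_le_div_mul_add hbdd fun t ht =>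
    ⟨letterWeight μ l + t * exponentWeight μ l + letterWeight μ l, by
      filter_upwards [eventually_ge_atTop 0] with s hs
      linarith [freeSeminorm_truncFG_le hμ l hs ht]⟩
  rw [scaledTruncNorm_eq_div hμ]
  exact ⟨_, tendsto_div_of_abs_sub_le tendsto_id hlim fun t => by
    rw [sub_add_cancel_left, abs_neg]⟩

theorem lift_truncPowHom_wordProd (N : GroupSeminorm (FreeGroup A)) [IsConjInvariant N]
    (l : List (A × ℝ)) :
    Monoid.CoprodI.lift (fun a => truncPowHom N (FreeGroup.of a)) (wordProd l) =
      QuotientGroup.mk (truncFG l) := by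
  induction l with
  | nil => exact map_one _
  | cons p l ih =>
    have hword : wordProd (p :: l) = genFR A p * wordProd l := by simp [wordProd]
    have htrunc : truncFG (p :: l) =
        (fun t => FreeGroup.of p.1 ^ myfloor (t * p.2)) * truncFG l := by
      funext t; simp [truncFG]
    rw [hword, htrunc, map_mul, ih, QuotientGroup.mk_mul, genFR, Monoid.CoprodI.lift_of]
    rfl

theorem truncFG_div_mem_boundedSubgroup (N : GroupSeminorm (FreeGroup A)) [IsConjInvariant N]
    {l l' : List (A × ℝ)} (h : wordProd l = wordProd l') :
    truncFG l / truncFG l' ∈ boundedSubgroup N ℝ := by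
  rw [← QuotientGroup.eq_iff_div_mem, ← lift_truncPowHom_wordProd, h, lift_truncPowHom_wordProd]

theorem tendsto_scaledTruncNorm_of_wordProd_eq (hμ : ∀ a, 0 ≤ μ a) {l l' : List (A × ℝ)}
    (h : wordProd l = wordProd l') {L : ℝ} (hL : Tendsto (scaledTruncNorm μ l) atTop (nhds L)) :
    Tendsto (scaledTruncNorm μ l') atTop (nhds L) := by
  obtain ⟨C, hC⟩ := truncFG_div_mem_boundedSubgroup (freeSeminorm hμ) h.symm
  rw [scaledTruncNorm_eq_div hμ] at hL ⊢
  exact tendsto_div_of_abs_sub_le tendsto_id hL fun t =>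
    (abs_sub_map_le_div (freeSeminorm hμ) _ _).trans (hC t)

end FreeGroupNorm

/-- (a) for any word `𝐰 = a₁(r₁)⋯a_k(r_k)` the function `t ↦ (1/t)·‖𝐰[t]‖_{F(A;μ)}` is
Cauchy as `t → ∞`, and in particular has a limit;
(b) if two words `𝐰, 𝐰'` represent the same element of `F_ℝ(A)` then the two limits
coincide. -/
theorem scaledTruncNorm_cauchy_and_welldefined
    {A : Type*} (μ : A → ℝ) (hμ : ∀ a, 0 ≤ μ a) :
    (∀ l : List (A × ℝ),
      (∀ ε > (0:ℝ), ∃ T : ℝ, ∀ s ≥ T, ∀ t ≥ T,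
        |scaledTruncNorm μ l s - scaledTruncNorm μ l t| < ε) ∧
      (∃ L : ℝ, Tendsto (scaledTruncNorm μ l) atTop (nhds L))) ∧
    (∀ l l' : List (A × ℝ), wordProd l = wordProd l' →
      ∃ L : ℝ, Tendsto (scaledTruncNorm μ l) atTop (nhds L) ∧
        Tendsto (scaledTruncNorm μ l') atTop (nhds L)) := by
  refine ⟨fun l => ?_, fun l l' h => ?_⟩
  · obtain ⟨L, hL⟩ := exists_tendsto_scaledTruncNorm hμ l
    exact ⟨fun ε hε => Metric.cauchySeq_iff.1 hL.cauchySeq ε hε, L, hL⟩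
  · obtain ⟨L, hL⟩ := exists_tendsto_scaledTruncNorm hμ l
    exact ⟨L, hL, tendsto_scaledTruncNorm_of_wordProd_eq hμ h hL⟩
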